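/- arXiv:1311.0335 — 2 statements merged into one kernel-verified Lean document; each statement's English description precedes it below -/
import Mathlib

section
/- A real number R in [0,1) is normal to base b if and only if for every integer ℓ ≥ 1, lim_{n→∞} D_ℓ((R)_b↾n, b) = 0. -/
open Filter

/-- The `(i+1)`-st digit (for `i = 0, 1, 2, ...`) of the base-`b` expansion of a real
`R ∈ [0,1)`.  For such `R` this is the unique expansion whose digits are not eventually
all equal to `b - 1`. -/
noncomputable def rdigit (b : ℕ) (R : ℝ) (i : ℕ) : ℕ := (⌊R * (b : ℝ) ^ (i + 1)⌋).toNat % b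

/-- The block consisting of the first `n` digits of the base-`b` expansion of `R`. -/
noncomputable def rdigits (b : ℕ) (R : ℝ) (n : ℕ) : List ℕ := (List.range n).map (rdigit b R)

/-- `R` is simply normal to base `b`: every digit `d < b` occurs with limiting
frequency `1/b` in the base-`b` expansion of `R`. -/
def SimplyNormal (b : ℕ) (R : ℝ) : Prop :=
  ∀ d < b, Tendsto (fun n => ((rdigits b R n).count d : ℝ) / n) atTop (nhds (1 / (b : ℝ)))

/-- `R` is normal to base `b`: it is simply normal to base `b ^ ℓ` for every `ℓ ≥ 1`. -/
def NormalBase (b : ℕ) (R : ℝ) : Prop := ∀ ℓ : ℕ, 1 ≤ ℓ → SimplyNormal (b ^ ℓ) R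


/-- The number of occurrences of the block `v` in the block `u`: the number of
positions `i` (0-indexed) at which `v` occurs as a contiguous subblock of `u`. -/
def occBlock (u v : List ℕ) : ℕ :=
  ((Finset.range (u.length + 1 - v.length)).filter fun i => (u.drop i).take v.length = v).card

/-- The block discrepancy `D_ℓ(u, b)` of the block `u` to blocks of length `ℓ` in base `b`:
the maximum over all blocks `v` of length `ℓ` in base `b` of `|occ(u,v)/|u| − 1/b^ℓ|`. -/
noncomputable def blockDisc (ℓ b : ℕ) (u : List ℕ) : ℝ :=
  sSup ((fun v => |(occBlock u v : ℝ) / u.length - 1 / (b : ℝ) ^ ℓ|) ''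
    {v : List ℕ | v.length = ℓ ∧ ∀ d ∈ v, d < b})

/-- Cesaro average tends to `a`. -/
def Avg (f : ℕ → ℝ) (a : ℝ) : Prop :=
  Tendsto (fun n : ℕ => (∑ i ∈ Finset.range n, f i) / (n : ℝ)) atTop (nhds a)

lemma tendsto_of_bdd {S T : ℕ → ℝ} {C a : ℝ} (h : ∀ n, |T n - S n| ≤ C)
    (hS : Tendsto (fun n : ℕ => S n / (n : ℝ)) atTop (nhds a)) :
    Tendsto (fun n : ℕ => T n / (n : ℝ)) atTop (nhds a) := by
  have h2 : Tendsto (fun n : ℕ => (T n - S n) / (n : ℝ)) atTop (nhds 0) := by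
    apply squeeze_zero_norm (a := fun n : ℕ => C / (n : ℝ))
    · intro n
      rw [Real.norm_eq_abs, abs_div, Nat.abs_cast]
      exact div_le_div_of_nonneg_right (h n) (Nat.cast_nonneg n)
    · exact tendsto_const_div_atTop_nhds_zero_nat C
  have := hS.add h2
  simp only [add_zero] at this
  refine this.congr fun n => ?_
  ring

lemma Avg.shift {f : ℕ → ℝ} {a C : ℝ} (hC : ∀ i, |f i| ≤ C) (h : Avg f a) (s : ℕ) :
    Avg (fun i => f (i + s)) a := by
  refine tendsto_of_bdd (C := 2 * s * C) (fun n => ?_) h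
  have e1 := Finset.sum_range_add f s n
  have e2 := Finset.sum_range_add f n s
  have e3 : ∑ x ∈ Finset.range n, f (x + s) = ∑ x ∈ Finset.range n, f (s + x) :=
    Finset.sum_congr rfl fun x _ => by rw [add_comm]
  have b1 : |∑ x ∈ Finset.range s, f x| ≤ s * C := by
    refine (Finset.abs_sum_le_sum_abs _ _).trans ?_
    refine (Finset.sum_le_sum fun i _ => hC i).trans ?_
    simp
  have b2 : |∑ x ∈ Finset.range s, f (n + x)| ≤ s * C := by
    refine (Finset.abs_sum_le_sum_abs _ _).trans ?_
    refine (Finset.sum_le_sum fun i _ => hC (n + i)).trans ?_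
    simp
  rw [add_comm s n] at e1
  rw [abs_le] at *
  constructor <;> linarith [b1.1, b1.2, b2.1, b2.2]

lemma Avg.sum {ι : Type*} (s : Finset ι) {f : ι → ℕ → ℝ} {a : ι → ℝ}
    (h : ∀ j ∈ s, Avg (f j) (a j)) : Avg (fun i => ∑ j ∈ s, f j i) (∑ j ∈ s, a j) := by
  have := tendsto_finsetSum s h
  refine this.congr fun n => ?_
  rw [Finset.sum_comm, Finset.sum_div]

lemma Avg.const_mul {f : ℕ → ℝ} {a : ℝ} (c : ℝ) (h : Avg f a) :
    Avg (fun i => c * f i) (c * a) := by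
  refine (Tendsto.const_mul c h).congr fun n => ?_
  rw [← Finset.mul_sum, mul_div_assoc]

lemma avg_const (c : ℝ) : Avg (fun _ => c) c := by
  refine tendsto_const_nhds.congr' ?_
  filter_upwards [eventually_gt_atTop 0] with n hn
  have : (n : ℝ) ≠ 0 := by positivity
  simp
  field_simp

lemma avg_sub_const_iff {f : ℕ → ℝ} {c : ℝ} : Avg (fun i => f i - c) 0 ↔ Avg f c := by
  constructor
  · intro h
    have := Tendsto.add h (avg_const c)
    rw [zero_add] at this
    refine this.congr fun n => ?_
    rw [Finset.sum_sub_distrib]; ring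
  · intro h
    have := Tendsto.sub h (avg_const c)
    rw [sub_self] at this
    refine this.congr fun n => ?_
    rw [Finset.sum_sub_distrib]; ring

lemma avg_comp {M : ℕ} {B : ℕ → ℕ} (hB : ∀ i, B i < M)
    (h : ∀ w < M, Avg (fun i => if B i = w then 1 else 0) (1 / (M : ℝ))) (F : ℕ → ℝ) 
    (hF : ∑ w ∈ Finset.range M, F w = 0) :
    Avg (fun i => F (B i)) 0 := by
  have := Avg.sum (Finset.range M) (f := fun w i => F w * (if B i = w then 1 else 0))
    (a := fun w => F w * (1 / (M : ℝ)))
    (fun w hw => (h w (Finset.mem_range.1 hw)).const_mul (F w))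
  rw [← Finset.sum_mul, hF, zero_mul] at this
  convert this using 2 with i
  simp [hB]

lemma sum_range_mul_blocks (u : ℕ → ℝ) (q L : ℕ) : ∑ i ∈ Finset.range (q * L), u i =
    ∑ k ∈ Finset.range q, ∑ h ∈ Finset.range L, u (k * L + h) := by
  induction q with
  | zero => simp
  | succ q ih => rw [Nat.succ_mul, Finset.sum_range_add, ih, Finset.sum_range_succ]

lemma avg_forward {u : ℕ → ℝ} (hu : ∀ i, |u i| ≤ 1) (l : ℕ)
    (h : ∀ L h, h + l ≤ L → Avg (fun k => u (k * L + h)) 0) : Avg u 0 := by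
  rw [Avg, Metric.tendsto_atTop']
  intro ε hε
  obtain ⟨m, hm⟩ := exists_nat_gt (3 * l / ε)
  set L := m + l + 1 with hL
  have hLε : (l : ℝ) ≤ ε / 3 * L := by
    rw [div_lt_iff₀ hε] at hm
    have : (m : ℝ) ≤ L := by rw [hL]; push_cast; linarith [(Nat.cast_nonneg l : (0:ℝ) ≤ l)]
    nlinarith
  have hLpos : 0 < L := by omega
  have hA : Avg (fun k => ∑ h ∈ Finset.range (m + 1), u (k * L + h)) 0 := by
    have := Avg.sum (Finset.range (m + 1)) (f := fun h k => u (k * L + h)) (a := fun _ => 0)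
      (fun j hj => h L j (by rw [Finset.mem_range] at hj; omega))
    simpa using this
  have hA' : ∀ᶠ q : ℕ in atTop,
      |∑ k ∈ Finset.range q, ∑ h ∈ Finset.range (m + 1), u (k * L + h)| ≤ ε / 6 * q := by
    have := (Metric.tendsto_nhds.1 hA) (ε / 6) (by positivity)
    filter_upwards [this, eventually_gt_atTop 0] with q hq hq0
    have hq0' : (0 : ℝ) < q := by exact_mod_cast hq0
    rw [Real.dist_eq, sub_zero, abs_div, Nat.abs_cast, div_lt_iff₀ hq0'] at hq
    exact hq.le
  have hdiv : Tendsto (fun n : ℕ => n / L) atTop atTop := Nat.tendsto_div_const_atTop hLpos.ne'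
  have hn : ∀ᶠ n : ℕ in atTop, (L : ℝ) < ε / 3 * n := by
    have : Tendsto (fun n : ℕ => ε / 3 * (n : ℝ)) atTop atTop :=
      tendsto_natCast_atTop_atTop.const_mul_atTop (by positivity)
    exact this.eventually_gt_atTop _
  obtain ⟨N, hN⟩ := eventually_atTop.1 ((hdiv.eventually hA').and (hn.and (eventually_gt_atTop 0)))
  refine ⟨N, fun n hnN => ?_⟩
  obtain ⟨h1, h2, h3⟩ := hN n hnN.le
  have h3' : (0 : ℝ) < n := by exact_mod_cast h3
  rw [Real.dist_eq, sub_zero, abs_div, Nat.abs_cast, div_lt_iff₀ h3']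
  set q := n / L with hq
  have hqn : q * L + n % L = n := by rw [hq, mul_comm]; exact Nat.div_add_mod n L
  have hr : n % L < L := Nat.mod_lt _ hLpos
  have e1 : ∑ i ∈ Finset.range n, u i = ∑ i ∈ Finset.range (q * L), u i +
      ∑ i ∈ Finset.range (n % L), u (q * L + i) := by
    rw [← Finset.sum_range_add, hqn]
  have e3 : ∑ k ∈ Finset.range q, ∑ h ∈ Finset.range L, u (k * L + h) =
      ∑ k ∈ Finset.range q, ∑ h ∈ Finset.range (m + 1), u (k * L + h) +
      ∑ k ∈ Finset.range q, ∑ h ∈ Finset.range l, u (k * L + (m + 1 + h)) := by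
    rw [← Finset.sum_add_distrib]
    refine Finset.sum_congr rfl fun k _ => ?_
    rw [show L = m + 1 + l by omega, Finset.sum_range_add]
  have bl : ∀ (r : ℕ) (g : ℕ → ℕ), |∑ h ∈ Finset.range r, u (g h)| ≤ r := by
    intro r g
    refine (Finset.abs_sum_le_sum_abs _ _).trans ?_
    refine (Finset.sum_le_sum fun i _ => hu _).trans ?_
    simp
  have b1 : |∑ k ∈ Finset.range q, ∑ h ∈ Finset.range l, u (k * L + (m + 1 + h))| ≤ q * l := by
    refine (Finset.abs_sum_le_sum_abs _ _).trans ?_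
    refine (Finset.sum_le_sum fun i _ => bl l _).trans ?_
    simp
  have b2 := bl (n % L) (fun i => q * L + i)
  have hr' : ((n % L : ℕ) : ℝ) ≤ L := by exact_mod_cast hr.le
  have hqL : (q : ℝ) * L ≤ n := by exact_mod_cast (by omega : q * L ≤ n)
  have hL1 : (1 : ℝ) ≤ L := by exact_mod_cast hLpos
  have hq0 : (0 : ℝ) ≤ q := Nat.cast_nonneg q
  have hqle : (q : ℝ) ≤ n := by nlinarith
  have hql : (q : ℝ) * l ≤ ε / 3 * n := by
    calc (q : ℝ) * l ≤ q * (ε / 3 * L) := by gcongr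
      _ = ε / 3 * (q * L) := by ring
      _ ≤ ε / 3 * n := by gcongr
  have hqe : ε / 6 * q ≤ ε / 6 * n := by gcongr
  rw [e1, sum_range_mul_blocks, e3]
  refine (abs_add_le _ _).trans_lt ?_
  have := abs_add_le (∑ k ∈ Finset.range q, ∑ h ∈ Finset.range (m + 1), u (k * L + h))
    (∑ k ∈ Finset.range q, ∑ h ∈ Finset.range l, u (k * L + (m + 1 + h)))
  nlinarith

lemma avg_backward {f : ℕ → ℝ} (hf : ∀ i, |f i| ≤ 1) (l : ℕ) (hl : 1 ≤ l)
    (h : ∀ t, 1 ≤ t → Avg (fun i => f i * f (i + t * l)) 0) : Avg (fun k => f (k * l)) 0 := by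
  rw [Avg, Metric.tendsto_atTop']
  intro ε hε
  obtain ⟨m, hm⟩ := exists_nat_gt (8 * l / ε ^ 2)
  set H := m + 1 with hH
  have hH1 : (1 : ℝ) ≤ H := by rw [hH]; push_cast; linarith [(Nat.cast_nonneg m : (0:ℝ) ≤ m)]
  have hHε : (l : ℝ) * (H + 1) ≤ (ε / 2 * H) ^ 2 := by
    rw [div_lt_iff₀ (by positivity)] at hm
    have : (m : ℝ) ≤ H := by rw [hH]; push_cast; linarith
    have h1 : 8 * (l : ℝ) ≤ H * ε ^ 2 := by nlinarith [sq_nonneg ε]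
    have hl0 : (0 : ℝ) ≤ l := Nat.cast_nonneg l
    nlinarith
  have hbp : ∀ i j, |f i * f j| ≤ 1 := fun i j => by
    rw [abs_mul]; exact mul_le_one₀ (hf i) (abs_nonneg _) (hf j)
  have hoff : ∀ s t, s < t → Avg (fun i => f (i + s * l) * f (i + t * l)) 0 := by
    intro s t hst
    have := (h (t - s) (by omega)).shift (fun i => hbp i _) (s * l)
    convert this using 4 with i
    rw [add_assoc, ← add_mul]; congr 3; omega
  have hoff' : ∀ s t, s ≠ t → Avg (fun i => f (i + s * l) * f (i + t * l)) 0 := by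
    intro s t hst
    rcases lt_or_gt_of_ne hst with h' | h'
    · exact hoff s t h'
    · convert hoff t s h' using 2 with i
      ring
  set G : ℕ → ℝ := fun i => ∑ t ∈ Finset.range H, f (i + t * l) with hG
  have hA : Avg (fun i => ∑ s ∈ Finset.range H, ∑ t ∈ Finset.range H,
      if s = t then 0 else f (i + s * l) * f (i + t * l)) 0 := by
    have := Avg.sum (Finset.range H) (f := fun s i => ∑ t ∈ Finset.range H,
      if s = t then 0 else f (i + s * l) * f (i + t * l)) (a := fun _ => 0) ?_
    · simpa using this
    intro s _
    have := Avg.sum (Finset.range H) (f := fun t i => 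
      if s = t then 0 else f (i + s * l) * f (i + t * l)) (a := fun _ => 0) ?_
    · simpa using this
    intro t _
    by_cases hst : s = t
    · simpa [hst] using avg_const 0
    · simpa [hst] using hoff' s t hst
  have hG2 : ∀ i, G i ^ 2 ≤ (∑ s ∈ Finset.range H, ∑ t ∈ Finset.range H,
      if s = t then 0 else f (i + s * l) * f (i + t * l)) + H := by
    intro i
    have : (H : ℝ) = ∑ s ∈ Finset.range H, ∑ t ∈ Finset.range H, if s = t then (1 : ℝ) else 0 := by
      have e : ∀ s ∈ Finset.range H, (∑ t ∈ Finset.range H, if s = t then (1 : ℝ) else 0) = 1 := by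
        intro s hs
        rw [Finset.sum_ite_eq, if_pos hs]
      rw [Finset.sum_congr rfl e]
      simp
    conv_rhs => rw [this]
    rw [hG, sq]
    simp only
    rw [Finset.sum_mul_sum, ← Finset.sum_add_distrib]
    refine Finset.sum_le_sum fun s _ => ?_
    rw [← Finset.sum_add_distrib]
    refine Finset.sum_le_sum fun t _ => ?_
    split_ifs with hst
    · rw [zero_add]; exact (le_abs_self _).trans (hbp _ _)
    · simp
  have hA' : ∀ᶠ n : ℕ in atTop, ∑ i ∈ Finset.range n, G i ^ 2 ≤ n * (H + 1) := by
    have := (Metric.tendsto_nhds.1 hA) 1 (by positivity)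
    filter_upwards [this, eventually_gt_atTop 0] with q hq hq0
    have hq0' : (0 : ℝ) < q := by exact_mod_cast hq0
    rw [Real.dist_eq, sub_zero, abs_div, Nat.abs_cast, div_lt_iff₀ hq0'] at hq
    refine (Finset.sum_le_sum fun i _ => hG2 i).trans ?_
    rw [Finset.sum_add_distrib]
    have := le_abs_self (∑ i ∈ Finset.range q, ∑ s ∈ Finset.range H, ∑ t ∈ Finset.range H,
      if s = t then 0 else f (i + s * l) * f (i + t * l))
    simp only [Finset.sum_const, Finset.card_range, nsmul_eq_mul]
    linarith
  have hmul : Tendsto (fun q : ℕ => q * l) atTop atTop :=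
    tendsto_id.atTop_mul_const' (by omega)
  have hn : ∀ᶠ n : ℕ in atTop, 2 * (H : ℝ) < ε / 2 * n := by
    have : Tendsto (fun n : ℕ => ε / 2 * (n : ℝ)) atTop atTop :=
      tendsto_natCast_atTop_atTop.const_mul_atTop (by positivity)
    exact this.eventually_gt_atTop _
  obtain ⟨N, hN⟩ := eventually_atTop.1 ((hmul.eventually hA').and (hn.and (eventually_gt_atTop 0)))
  refine ⟨N, fun q hqN => ?_⟩
  obtain ⟨h1, h2, h3⟩ := hN q hqN.le
  have h3' : (0 : ℝ) < q := by exact_mod_cast h3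
  rw [Real.dist_eq, sub_zero, abs_div, Nat.abs_cast, div_lt_iff₀ h3']
  have c1 : ∑ k ∈ Finset.range q, G (k * l) ^ 2 ≤ ∑ i ∈ Finset.range (q * l), G i ^ 2 := by
    have hinj : Set.InjOn (fun k => k * l) (Finset.range q : Set ℕ) := fun a _ c _ hac =>
      Nat.eq_of_mul_eq_mul_right (by omega) hac
    rw [← Finset.sum_image (f := fun i => G i ^ 2) hinj]
    refine Finset.sum_le_sum_of_subset_of_nonneg ?_ fun _ _ _ => sq_nonneg _
    intro i hi
    simp only [Finset.mem_image, Finset.mem_range] at hi ⊢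
    obtain ⟨k, hk, rfl⟩ := hi
    exact Nat.mul_lt_mul_of_pos_right hk (by omega)
  have c2 := sq_sum_le_card_mul_sum_sq (s := Finset.range q) (f := fun k => G (k * l))
  rw [Finset.card_range] at c2
  have c3 : |∑ k ∈ Finset.range q, G (k * l)| ≤ q * (ε / 2 * H) := by
    apply abs_le_of_sq_le_sq _ (by positivity)
    refine c2.trans ?_
    calc (q : ℝ) * ∑ k ∈ Finset.range q, G (k * l) ^ 2 ≤ q * ((q * l : ℕ) * (H + 1)) := by
          gcongr; exact c1.trans h1
      _ = q ^ 2 * (l * (H + 1)) := by push_cast; ring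
      _ ≤ q ^ 2 * (ε / 2 * H) ^ 2 := by gcongr
      _ = _ := by ring
  have c4 : |H * ∑ k ∈ Finset.range q, f (k * l) - ∑ k ∈ Finset.range q, G (k * l)| ≤
      H * (2 * H) := by
    have e : H * ∑ k ∈ Finset.range q, f (k * l) - ∑ k ∈ Finset.range q, G (k * l) =
      ∑ t ∈ Finset.range H, (∑ k ∈ Finset.range q, f (k * l) -
        ∑ k ∈ Finset.range q, f ((t + k) * l)) := by
      rw [Finset.sum_sub_distrib, hG, Finset.sum_comm]
      simp only [Finset.sum_const, Finset.card_range, nsmul_eq_mul]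
      congr 1
      refine Finset.sum_congr rfl fun t _ => Finset.sum_congr rfl fun k _ => ?_
      congr 1; ring
    rw [e]
    refine (Finset.abs_sum_le_sum_abs _ _).trans ?_
    have : ∀ t ∈ Finset.range H, |(∑ k ∈ Finset.range q, f (k * l) -
        ∑ k ∈ Finset.range q, f ((t + k) * l))| ≤ 2 * H := by
      intro t ht
      have ht' : (t : ℝ) ≤ H := by exact_mod_cast (Finset.mem_range.1 ht).le
      have e1 := Finset.sum_range_add (fun k => f (k * l)) t q
      have e2 := Finset.sum_range_add (fun k => f (k * l)) q t
      have bl : ∀ (g : ℕ → ℕ), |∑ h ∈ Finset.range t, f (g h)| ≤ t := by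
        intro g
        refine (Finset.abs_sum_le_sum_abs _ _).trans ?_
        refine (Finset.sum_le_sum fun i _ => hf _).trans ?_
        simp
      have b1 := bl (fun k => k * l)
      have b2 := bl (fun k => (q + k) * l)
      rw [add_comm t q] at e1
      rw [abs_le] at *
      constructor <;> linarith [b1.1, b1.2, b2.1, b2.2]
    refine (Finset.sum_le_sum this).trans ?_
    simp
  have c5 : |(H : ℝ) * ∑ k ∈ Finset.range q, f (k * l)| ≤ H * (2 * H) + q * (ε / 2 * H) := by
    have := abs_add_le (H * ∑ k ∈ Finset.range q, f (k * l) - ∑ k ∈ Finset.range q, G (k * l))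
      (∑ k ∈ Finset.range q, G (k * l))
    rw [sub_add_cancel] at this
    linarith
  rw [abs_mul, Nat.abs_cast] at c5
  have c6 : |∑ k ∈ Finset.range q, f (k * l)| ≤ 2 * H + q * (ε / 2) := by
    refine le_of_mul_le_mul_left (c5.trans_eq ?_) (by linarith : (0 : ℝ) < H)
    ring
  nlinarith

/-- The value of the length-`m` block of digits starting at (0-indexed) position `i`. -/
noncomputable def blk (b : ℕ) (R : ℝ) (m i : ℕ) : ℕ := ⌊R * (b : ℝ) ^ (i + m)⌋₊ % b ^ m

lemma blk_lt {b : ℕ} (hb : 2 ≤ b) (R : ℝ) (m i : ℕ) : blk b R m i < b ^ m :=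
  Nat.mod_lt _ (by positivity)

lemma rdigit_eq_blk (b : ℕ) (R : ℝ) (i : ℕ) : rdigit b R i = blk b R 1 i := by
  simp [rdigit, blk, Int.floor_toNat]

lemma rdigit_pow_eq_blk (b : ℕ) (R : ℝ) (l k : ℕ) : rdigit (b ^ l) R k = blk b R l (k * l) := by
  simp only [rdigit, blk, Int.floor_toNat]
  rw [Nat.cast_pow, ← pow_mul]
  ring_nf

lemma floor_shift {b : ℕ} (hb : 2 ≤ b) (R : ℝ) (j k : ℕ) :
    ⌊R * (b : ℝ) ^ j⌋₊ = ⌊R * (b : ℝ) ^ (j + k)⌋₊ / b ^ k := by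
  rw [← Nat.floor_div_natCast]
  congr 1
  have : (b : ℝ) ≠ 0 := by positivity
  push_cast
  rw [pow_add]
  field_simp

lemma blk_sub {b : ℕ} (hb : 2 ≤ b) (R : ℝ) (m i h l s : ℕ) (hm : h + l + s = m) :
    blk b R l (i + h) = blk b R m i / b ^ s % b ^ l := by
  unfold blk
  rw [floor_shift hb R (i + h + l) s, show i + h + l + s = i + m by omega]
  generalize ⌊R * (b : ℝ) ^ (i + m)⌋₊ = X
  rw [← hm, show h + l + s = s + (l + h) by ring, pow_add b s, Nat.mod_mul_right_div_self, pow_add b l,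
    Nat.mod_mul_right_mod]

lemma blk_succ {b : ℕ} (hb : 2 ≤ b) (R : ℝ) (l i : ℕ) :
    blk b R (l + 1) i = rdigit b R (i + l) + b * blk b R l i := by
  rw [rdigit_eq_blk, blk_sub hb R (l + 1) i l 1 0 rfl]
  have := blk_sub hb R (l + 1) i 0 l 1 (by omega)
  rw [add_zero] at this
  rw [this, Nat.mod_eq_of_lt (a := blk b R (l + 1) i / b ^ 1)]
  · simp [Nat.mod_add_div]
  · rw [pow_one]
    exact Nat.div_lt_of_lt_mul (by rw [← pow_succ']; exact blk_lt hb R _ _)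

lemma ofDigits_block {b : ℕ} (hb : 2 ≤ b) (R : ℝ) (l i : ℕ) :
    Nat.ofDigits b (((List.range l).map (fun j => rdigit b R (i + j))).reverse) = blk b R l i := by
  induction l with
  | zero => simp [blk, Nat.mod_one]
  | succ l ih =>
    rw [List.range_succ, List.map_append, List.reverse_append, blk_succ hb, ← ih]
    simp [Nat.ofDigits_cons]

lemma rdigit_lt {b : ℕ} (hb : 2 ≤ b) (R : ℝ) (i : ℕ) : rdigit b R i < b :=
  Nat.mod_lt _ (by omega)

lemma take_drop_rdigits (b : ℕ) (R : ℝ) (n i l : ℕ) (h : i + l ≤ n) :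
    ((rdigits b R n).drop i).take l = (List.range l).map (fun j => rdigit b R (i + j)) := by
  apply List.ext_getElem
  · simp [rdigits]; omega
  · intro k h1 h2
    simp [rdigits]

lemma block_eq_iff {b : ℕ} (hb : 2 ≤ b) (R : ℝ) (l i : ℕ) {v : List ℕ} (hv : v.length = l)
    (hv' : ∀ d ∈ v, d < b) :
    (List.range l).map (fun j => rdigit b R (i + j)) = v ↔
      blk b R l i = Nat.ofDigits b v.reverse := by
  rw [← ofDigits_block hb]
  constructor
  · rintro h; rw [h]
  · intro h
    have := Nat.injOn_ofDigits (b := b) (by omega) l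
      (x₁ := ((List.range l).map (fun j => rdigit b R (i + j))).reverse) (x₂ := v.reverse)
      ⟨by simp, by
        intro x hx
        simp only [List.mem_reverse, List.mem_map] at hx
        obtain ⟨j, _, rfl⟩ := hx
        exact rdigit_lt hb R _⟩ ⟨by simpa using hv, by simpa using hv'⟩ h
    exact List.reverse_injective this

lemma simplyNormal_iff (b : ℕ) (R : ℝ) (l : ℕ) :
    SimplyNormal (b ^ l) R ↔ ∀ c < b ^ l,
      Avg (fun k => if blk b R l (k * l) = c then 1 else 0) (1 / ((b ^ l : ℕ) : ℝ)) := by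
  unfold SimplyNormal Avg
  refine forall₂_congr fun c _ => ?_
  refine tendsto_congr fun n => ?_
  congr 1
  simp only [← rdigit_pow_eq_blk, rdigits]
  induction n with
  | zero => simp
  | succ n ih =>
    rw [List.range_succ, List.map_append, List.count_append, Finset.sum_range_succ, ← ih]
    simp [List.count_singleton]

lemma occ_iff {b : ℕ} (hb : 2 ≤ b) (R : ℝ) (l : ℕ) {v : List ℕ} (hv : v.length = l)
    (hv' : ∀ d ∈ v, d < b) (a : ℝ) :
    Tendsto (fun n => (occBlock (rdigits b R n) v : ℝ) / (rdigits b R n).length) atTop (nhds a) ↔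
      Avg (fun i => if blk b R l i = Nat.ofDigits b v.reverse then 1 else 0) a := by
  have hlen : ∀ n, (rdigits b R n).length = n := fun n => by simp [rdigits]
  have hocc : ∀ n, (occBlock (rdigits b R n) v : ℝ) = ∑ i ∈ Finset.range (n + 1 - l),
      if blk b R l i = Nat.ofDigits b v.reverse then 1 else 0 := by
    intro n
    rw [occBlock, hlen, hv, Finset.card_filter]
    push_cast
    refine Finset.sum_congr rfl fun i hi => ?_
    rw [Finset.mem_range] at hi
    rw [take_drop_rdigits b R n i l (by omega)]
    simp only [block_eq_iff hb R l i hv hv']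
  set g : ℕ → ℝ := fun i => if blk b R l i = Nat.ofDigits b v.reverse then 1 else 0 with hg
  have hg0 : ∀ i, |g i| ≤ 1 := fun i => by simp only [hg]; split_ifs <;> simp
  have bl : ∀ (r : ℕ) (k : ℕ), |∑ h ∈ Finset.range r, g (k + h)| ≤ r := by
    intro r k
    refine (Finset.abs_sum_le_sum_abs _ _).trans ?_
    refine (Finset.sum_le_sum fun i _ => hg0 _).trans ?_
    simp
  have hdiff : ∀ n, |∑ i ∈ Finset.range (n + 1 - l), g i - ∑ i ∈ Finset.range n, g i| ≤ l + 1 := by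
    intro n
    rcases le_total (n + 1 - l) n with h | h
    · obtain ⟨k, hk⟩ := Nat.exists_eq_add_of_le h
      have e := Finset.sum_range_add g (n + 1 - l) k
      rw [← hk] at e
      rw [e]
      have := bl k (n + 1 - l)
      have hk' : (k : ℝ) ≤ l := by exact_mod_cast (by omega : k ≤ l)
      rw [abs_sub_comm, add_sub_cancel_left]
      linarith
    · obtain ⟨k, hk⟩ := Nat.exists_eq_add_of_le h
      have e := Finset.sum_range_add g n k
      rw [← hk] at e
      rw [e]
      have := bl k n
      have hk' : (k : ℝ) ≤ 1 := by exact_mod_cast (by omega : k ≤ 1)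
      rw [add_sub_cancel_left]
      linarith [(Nat.cast_nonneg l : (0 : ℝ) ≤ l)]
  simp only [hlen, hocc]
  constructor
  · intro h
    exact tendsto_of_bdd (C := l + 1) (fun n => by rw [abs_sub_comm]; exact hdiff n) h
  · intro h
    exact tendsto_of_bdd (C := l + 1) hdiff h

lemma blockDisc_iff {b : ℕ} (hb : 2 ≤ b) (R : ℝ) (l : ℕ) :
    Tendsto (fun n => blockDisc l b (rdigits b R n)) atTop (nhds 0) ↔
    ∀ v : List ℕ, v.length = l ∧ (∀ d ∈ v, d < b) →
      Tendsto (fun n => (occBlock (rdigits b R n) v : ℝ) / (rdigits b R n).length) atTop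
        (nhds (1 / (b : ℝ) ^ l)) := by
  have hfin : {v : List ℕ | v.length = l ∧ ∀ d ∈ v, d < b}.Finite :=
    Set.Finite.of_injOn (Nat.mapsTo_ofDigits (by omega) l) (Nat.injOn_ofDigits (by omega) l)
      (Set.finite_lt_nat (b ^ l))
  constructor
  · intro h v hv
    rw [tendsto_iff_dist_tendsto_zero]
    refine squeeze_zero (fun _ => dist_nonneg) (fun n => ?_) h
    rw [Real.dist_eq]
    exact le_csSup (hfin.image _).bddAbove ⟨v, hv, rfl⟩
  · intro h
    rw [Metric.tendsto_nhds]
    intro ε hε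
    have : ∀ᶠ n in atTop, ∀ v ∈ {v : List ℕ | v.length = l ∧ ∀ d ∈ v, d < b},
        |(occBlock (rdigits b R n) v : ℝ) / (rdigits b R n).length - 1 / (b : ℝ) ^ l| < ε / 2 := by
      rw [eventually_all_finite hfin]
      intro v hv
      exact Metric.tendsto_nhds.1 (h v hv) (ε / 2) (by positivity)
    filter_upwards [this] with n hn
    rw [Real.dist_eq, sub_zero, blockDisc, abs_of_nonneg]
    · refine (Real.sSup_le ?_ (by positivity : 0 ≤ ε / 2)).trans_lt (by linarith)
      rintro _ ⟨v, hv, rfl⟩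
      exact (hn v hv).le
    · apply Real.sSup_nonneg
      rintro _ ⟨v, hv, rfl⟩
      exact abs_nonneg _

lemma blockDisc_iff' {b : ℕ} (hb : 2 ≤ b) (R : ℝ) (l : ℕ) :
    Tendsto (fun n => blockDisc l b (rdigits b R n)) atTop (nhds 0) ↔
    ∀ c < b ^ l, Avg (fun i => if blk b R l i = c then 1 else 0) (1 / ((b ^ l : ℕ) : ℝ)) := by
  rw [blockDisc_iff hb, Nat.cast_pow]
  constructor
  · intro h c hc
    obtain ⟨v, ⟨hv, hv'⟩, rfl⟩ := (Nat.bijOn_ofDigits (b := b) (by omega) l).surjOn hc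
    have := (occ_iff hb R l (v := v.reverse) (by simpa using hv) (by simpa using hv') _).1
      (h v.reverse ⟨by simpa using hv, by simpa using hv'⟩)
    simpa using this
  · rintro h v ⟨hv, hv'⟩
    rw [occ_iff hb R l hv hv']
    apply h
    exact Nat.mapsTo_ofDigits (by omega) l (x := v.reverse) ⟨by simpa using hv, by simpa using hv'⟩

/-- Centered indicator. -/
noncomputable def phi (M c : ℕ) (x : ℕ) : ℝ := (if x = c then 1 else 0) - 1 / (M : ℝ)

lemma phi_abs {M c : ℕ} (hM : 1 ≤ M) (x : ℕ) : |phi M c x| ≤ 1 := by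
  have h1 : (1 : ℝ) ≤ M := by exact_mod_cast hM
  have h2 : 1 / (M : ℝ) ≤ 1 := by rw [div_le_one (by linarith)]; exact h1
  have h3 : 0 ≤ 1 / (M : ℝ) := by positivity
  unfold phi
  rw [abs_le]
  split_ifs <;> constructor <;> linarith

lemma phi_sum {M c : ℕ} (hc : c < M) : ∑ x ∈ Finset.range M, phi M c x = 0 := by
  unfold phi
  rw [Finset.sum_sub_distrib, Finset.sum_ite_eq', if_pos (Finset.mem_range.2 hc)]
  have : (M : ℝ) ≠ 0 := by
    have : 0 < M := by omega
    positivity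
  simp
  field_simp
  simp

lemma phi_sum_fwd {b l s h c : ℕ} (hb : 2 ≤ b) (hc : c < b ^ l) :
    ∑ w ∈ Finset.range (b ^ (h + l + s)), phi (b ^ l) c (w / b ^ s % b ^ l) = 0 := by
  rw [pow_add, sum_range_mul_blocks]
  have hs : 0 < b ^ s := by positivity
  have : ∀ k ∈ Finset.range (b ^ (h + l)), ∑ x ∈ Finset.range (b ^ s),
      phi (b ^ l) c ((k * b ^ s + x) / b ^ s % b ^ l) = b ^ s * phi (b ^ l) c (k % b ^ l) := by
    intro k _
    rw [Finset.sum_congr rfl (g := fun _ => phi (b ^ l) c (k % b ^ l))]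
    · simp
    · intro x hx
      rw [mul_comm k, Nat.mul_add_div hs, Nat.div_eq_of_lt (Finset.mem_range.1 hx), add_zero]
  rw [Finset.sum_congr rfl this, ← Finset.mul_sum, pow_add, sum_range_mul_blocks]
  rw [Finset.sum_eq_zero, mul_zero]
  intro k _
  rw [← phi_sum hc]
  refine Finset.sum_congr rfl fun x hx => ?_
  rw [mul_comm k, Nat.mul_add_mod, Nat.mod_eq_of_lt (Finset.mem_range.1 hx)]

lemma phi_sum_bwd {b l d c : ℕ} (hb : 2 ≤ b) (hc : c < b ^ l) (hd : l ≤ d) :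
    ∑ w ∈ Finset.range (b ^ (l + d)), phi (b ^ l) c (w / b ^ d % b ^ l) * 
      phi (b ^ l) c (w % b ^ l) = 0 := by
  rw [pow_add, sum_range_mul_blocks, Finset.sum_comm]
  have hs : 0 < b ^ d := by positivity
  apply Finset.sum_eq_zero
  intro x hx
  rw [← mul_zero (phi (b ^ l) c (x % b ^ l)), ← phi_sum hc, Finset.mul_sum]
  refine Finset.sum_congr rfl fun k hk => ?_
  rw [mul_comm k, Nat.mul_add_div hs, Nat.div_eq_of_lt (Finset.mem_range.1 hx), add_zero,
    Nat.mod_eq_of_lt (Finset.mem_range.1 hk), mul_comm]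
  congr 2
  obtain ⟨e, rfl⟩ := Nat.exists_eq_add_of_le hd
  rw [pow_add, mul_assoc, Nat.mul_add_mod]

/-- A real `R ∈ [0,1)` is normal to base `b` if and only if for every `ℓ ≥ 1` the block
discrepancy of the first `n` digits of `(R)_b` to blocks of length `ℓ` tends to `0`. -/
theorem normal_iff_blockDisc_tendsto_zero
    (b : ℕ) (hb : 2 ≤ b) (R : ℝ) (hR : R ∈ Set.Ico (0 : ℝ) 1) :
    NormalBase b R ↔
      ∀ ℓ : ℕ, 1 ≤ ℓ →
        Tendsto (fun n => blockDisc ℓ b (rdigits b R n)) atTop (nhds 0) := by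
  simp only [NormalBase, simplyNormal_iff, blockDisc_iff' hb]
  constructor
  · intro H l hl c hc
    rw [← avg_sub_const_iff]
    change Avg (fun i => phi (b ^ l) c (blk b R l i)) 0
    refine avg_forward (fun i => phi_abs (Nat.one_le_pow _ _ (by omega)) _) l ?_
    intro L h hL
    obtain ⟨s, rfl⟩ := Nat.exists_eq_add_of_le hL
    have := avg_comp (B := fun k => blk b R (h + l + s) (k * (h + l + s)))
      (fun i => blk_lt hb R _ _) (H (h + l + s) (by omega)) _ (phi_sum_fwd hb hc)
    convert this using 3 with k
    rw [blk_sub hb R _ _ h l s rfl]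
  · intro H l hl c hc
    rw [← avg_sub_const_iff]
    change Avg (fun i => phi (b ^ l) c (blk b R l (i * l))) 0
    refine avg_backward (f := fun i => phi (b ^ l) c (blk b R l i))
      (fun i => phi_abs (Nat.one_le_pow _ _ (by omega)) _) l hl ?_
    intro t ht
    have hd : l ≤ t * l := Nat.le_mul_of_pos_left l ht
    have := avg_comp (B := fun k => blk b R (l + t * l) k)
      (fun i => blk_lt hb R _ _) (H (l + t * l) (by omega)) _ (phi_sum_bwd hb hc hd)
    convert this using 3 with i
    · have := blk_sub hb R (l + t * l) i 0 l (t * l) (by omega)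
      rw [add_zero] at this
      rw [this]
    · rw [blk_sub hb R (l + t * l) i (t * l) l 0 (by omega)]
      simp
end

section
/- Let i ≥ 1, let δ_i = 1/(2^{2i−2}·((i+1)!)²), and let k_i be the least integer greater than max(⌈6(i+2)⌉, −ln(δ_i/(2(i+1)²))·6(i+2)²). Let I⃗ = (I_2, …, I_{i+1}) be an (i+1)-sequence, let L be a dyadic subinterval of I_{i+1} with μ(L) ≥ μ(I_{i+1})/4, and partition L into 2^{k_i·⌈log₂(i+1)⌉} dyadic subintervals of equal measure. Then there is at least one subinterval J_2 of this partition and an (i+1)-sequence J⃗ = (J_2, …, J_{i+1}) such that for every base b with 2 ≤ b ≤ i+1, x_b(I⃗) is a proper prefix of x_b(J⃗) and the block u_b defined by x_b(I⃗)·u_b = x_b(J⃗) satisfies D(u_b, b) ≤ 1/(i+2). -/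
open MeasureTheory
open scoped ENNReal

/-- The simple discrepancy `D(u, b)` of a block `u` of digits in base `b`: the maximum
over all digits `d < b` of `|occ(u,d)/|u| − 1/b|`. -/
noncomputable def simpleDisc (b : ℕ) (u : List ℕ) : ℝ :=
  sSup ((fun d => |(u.count d : ℝ) / u.length - 1 / (b : ℝ)|) '' {d : ℕ | d < b})

/-- `xblock b m a` is the block of length `m` of base-`b` digits of `a` (most
significant digit first, padded with leading zeros); for `a < b^m` this is the base-`b`
expansion of the left endpoint of the `b`-adic interval `[a/b^m, (a+1)/b^m)`. -/
def xblock (b m a : ℕ) : List ℕ :=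
  (List.range m).map fun j => a / b ^ (m - 1 - j) % b


theorem xblock_succ (b l w : ℕ) : xblock b (l+1) w = xblock b l (w / b) ++ [w % b] := by
  unfold xblock
  rw [List.range_succ, List.map_append]
  congr 1
  · apply List.map_congr_left
    intro j hj
    rw [List.mem_range] at hj
    have : l + 1 - 1 - j = (l - 1 - j) + 1 := by omega
    rw [this, pow_succ', Nat.div_div_eq_div_mul]
  · simp

theorem xblock_length (b l w : ℕ) : (xblock b l w).length = l := by simp [xblock]

theorem xblock_split (b m : ℕ) (hb : 0 < b) (l : ℕ) : ∀ w : ℕ,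
    xblock b m (w / b ^ l) ++ xblock b l w = xblock b (m + l) w := by
  induction l with
  | zero => intro w; simp [xblock]
  | succ l ih =>
    intro w
    rw [xblock_succ, ← add_assoc, xblock_succ, ← ih, pow_succ', Nat.div_div_eq_div_mul,
      List.append_assoc]

theorem sum_range_mul_split (f : ℕ → ℝ) (N b : ℕ) :
    ∑ w ∈ Finset.range (N * b), f w =
      ∑ v ∈ Finset.range N, ∑ e ∈ Finset.range b, f (v * b + e) := by
  induction N with
  | zero => simp
  | succ N ih =>
    rw [Finset.sum_range_succ, ← ih, Nat.succ_mul, Finset.sum_range_add]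

theorem gen_count (b d : ℕ) (hd : d < b) (z : ℝ) (a l : ℕ) :
    ∑ w ∈ Finset.range (b ^ l), z ^ ((xblock b l (a * b ^ l + w)).count d) =
      ((b : ℝ) - 1 + z) ^ l := by
  induction l with
  | zero => simp [xblock]
  | succ l ih =>
    rw [pow_succ b, sum_range_mul_split, pow_succ _ l, ← ih, Finset.sum_mul]
    apply Finset.sum_congr rfl
    intro v _
    have h1 : ∀ e ∈ Finset.range b,
        z ^ ((xblock b (l+1) (a * (b ^ l * b) + (v * b + e))).count d) =
        z ^ ((xblock b l (a * b ^ l + v)).count d) * (if e = d then z else 1) := by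
      intro e he
      rw [Finset.mem_range] at he
      have e1 : a * (b ^ l * b) + (v * b + e) = e + b * (a * b ^ l + v) := by ring
      have hb : 0 < b := by omega
      rw [e1, xblock_succ, Nat.add_mul_div_left _ _ hb, Nat.add_mul_mod_self_left,
        Nat.div_eq_of_lt he, Nat.mod_eq_of_lt he, zero_add, List.count_append, pow_add]
      congr 1
      by_cases h : e = d <;> simp [h, List.count_singleton]
    rw [Finset.sum_congr rfl h1, ← Finset.mul_sum]
    congr 1
    have h2 : ∀ e ∈ Finset.range b, (if e = d then z else 1 : ℝ) =
        1 + (if e = d then z - 1 else 0) := by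
      intro e _; split_ifs <;> ring
    rw [Finset.sum_congr rfl h2, Finset.sum_add_distrib, Finset.sum_ite_eq']
    simp [hd]
    ring

theorem exp_quad (t : ℝ) (ht : |t| ≤ 1) : Real.exp t - 1 ≤ t + t ^ 2 := by
  have := Real.abs_exp_sub_one_sub_id_le ht
  have := (abs_le.mp this).2
  linarith

theorem mgf_bound (b : ℕ) (hb : 2 ≤ b) (t : ℝ) (ht : |t| ≤ 1) :
    (b : ℝ) - 1 + Real.exp t ≤ b * Real.exp (t / b + t ^ 2 / 2) := by
  have hb' : (2:ℝ) ≤ b := by exact_mod_cast hb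
  have h1 := exp_quad t ht
  have h2 := Real.add_one_le_exp (t / b + t ^ 2 / 2)
  have h3 : (b:ℝ) * (t / b + t ^ 2 / 2 + 1) ≤ b * Real.exp (t / b + t ^ 2 / 2) := by gcongr
  have h4 : (b:ℝ) * (t / b + t ^ 2 / 2 + 1) = t + b * t^2/2 + b := by field_simp
  nlinarith [sq_nonneg t]

/-- one-sided tail -/
theorem tail_bound (b d : ℕ) (hb : 2 ≤ b) (hd : d < b) (t : ℝ) (ht : |t| ≤ 1) (a l : ℕ)
    (S : Finset ℕ) (hS : S ⊆ Finset.range (b ^ l))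
    (h : ∀ w ∈ S, l * (t / b + t ^ 2) ≤ t * ((xblock b l (a * b ^ l + w)).count d : ℝ)) :
    (S.card : ℝ) ≤ b ^ l * Real.exp (- (l * (t ^ 2 / 2))) := by
  have h1 : ∑ w ∈ S, Real.exp (l * (t / b + t ^ 2)) ≤
      ∑ w ∈ Finset.range (b ^ l), (Real.exp t) ^ ((xblock b l (a * b ^ l + w)).count d) := by
    refine le_trans (Finset.sum_le_sum (fun w hw => ?_))
      (Finset.sum_le_sum_of_subset_of_nonneg hS (fun _ _ _ => by positivity))
    rw [← Real.exp_nat_mul]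
    apply Real.exp_le_exp.mpr
    rw [mul_comm _ t]
    exact h w hw
  rw [gen_count b d hd, Finset.sum_const, nsmul_eq_mul] at h1
  have hb' : (2:ℝ) ≤ b := by exact_mod_cast hb
  have h2 : ((b : ℝ) - 1 + Real.exp t) ^ l ≤ (b * Real.exp (t / b + t ^ 2 / 2)) ^ l := by
    apply pow_le_pow_left₀ _ (mgf_bound b hb t ht)
    have := Real.exp_pos t
    linarith
  rw [mul_pow, ← Real.exp_nat_mul] at h2
  have h3 := h1.trans h2
  have h4 : Real.exp (l * (t / b + t ^ 2 / 2)) =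
    Real.exp (-(l * (t ^ 2 / 2))) * Real.exp (l * (t / b + t ^ 2)) := by
    rw [← Real.exp_add]; congr 1; ring
  rw [h4, ← mul_assoc] at h3
  exact le_of_mul_le_mul_right h3 (Real.exp_pos _)

theorem bad_bound (b d : ℕ) (hb : 2 ≤ b) (hd : d < b) (ε : ℝ) (h0 : 0 < ε) (h1 : ε ≤ 1) (a l : ℕ)
    (hl : 0 < l)
    (S : Finset ℕ) (hS : S ⊆ Finset.range (b ^ l))
    (h : ∀ w ∈ S, ε < |((xblock b l (a * b ^ l + w)).count d : ℝ) / l - 1 / b|) :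
    (S.card : ℝ) ≤ 2 * (b ^ l * Real.exp (- (l * (ε ^ 2 / 2)))) := by
  classical
  set P : ℕ → Prop := fun w => ε < ((xblock b l (a * b ^ l + w)).count d : ℝ) / l - 1 / b
  have hl' : (0:ℝ) < l := by exact_mod_cast hl
  have e1 := tail_bound b d hb hd ε (by rw [abs_of_pos h0]; exact h1) a l (S.filter P)
    ((Finset.filter_subset _ _).trans hS) (by
      intro w hw
      have := (Finset.mem_filter.mp hw).2
      simp only [P] at this
      have h3 : ε + 1 / b ≤ ((xblock b l (a * b ^ l + w)).count d : ℝ) / l := by linarith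
      rw [le_div_iff₀ hl'] at h3
      have := mul_le_mul_of_nonneg_left h3 h0.le
      calc _ = ε * ((ε + 1 / b) * l) := by ring
        _ ≤ _ := this)
  have e2 := tail_bound b d hb hd (-ε) (by rw [abs_neg, abs_of_pos h0]; exact h1) a l
    (S.filter (fun w => ¬ P w))
    ((Finset.filter_subset _ _).trans hS) (by
      intro w hw
      have hw' := Finset.mem_filter.mp hw
      have h5 := h w hw'.1
      have h6 := hw'.2
      simp only [P] at h6
      rcases lt_abs.mp h5 with h7 | h7
      · exact absurd h7 h6
      have h3 : ((xblock b l (a * b ^ l + w)).count d : ℝ) / l ≤ 1 / b - ε := by linarith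
      rw [div_le_iff₀ hl'] at h3
      have := mul_le_mul_of_nonneg_left h3 h0.le
      have h8 : ε * ((1 / b - ε) * l) = - (l * (-ε / b + (-ε) ^ 2)) := by ring
      linarith)
  rw [neg_sq] at e2
  have := Finset.card_filter_add_card_filter_not (s := S) P
  have : (S.card : ℝ) = (S.filter P).card + (S.filter (fun w => ¬ P w)).card := by
    exact_mod_cast this.symm
  linarith

def refM (m0 : ℕ) : ℕ → ℕ
  | 0 => m0
  | 1 => m0
  | 2 => m0
  | (b+3) => Nat.clog (b+3) (2 * (b+2) ^ refM m0 (b+2))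

def refA (m0 a0 : ℕ) : ℕ → ℕ
  | 0 => a0
  | 1 => a0
  | 2 => a0
  | (b+3) => refA m0 a0 (b+2) * (b+3) ^ refM m0 (b+3) / (b+2) ^ refM m0 (b+2) + 1

theorem refM_succ (m0 b : ℕ) (hb : 2 ≤ b) :
    refM m0 (b+1) = Nat.clog (b+1) (2 * b ^ refM m0 b) := by
  obtain ⟨c, rfl⟩ := Nat.exists_eq_add_of_le' hb
  rw [refM]

theorem refA_succ (m0 a0 b : ℕ) (hb : 2 ≤ b) :
    refA m0 a0 (b+1) = refA m0 a0 b * (b+1) ^ refM m0 (b+1) / b ^ refM m0 b + 1 := by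
  obtain ⟨c, rfl⟩ := Nat.exists_eq_add_of_le' hb
  rw [refA]

theorem refM_lower (m0 b : ℕ) (hb : 2 ≤ b) :
    2 * b ^ refM m0 b ≤ (b+1) ^ refM m0 (b+1) := by
  rw [refM_succ m0 b hb]
  exact Nat.le_pow_clog (by omega) _

theorem refM_upper (m0 b : ℕ) (hb : 2 ≤ b) :
    (b+1) ^ refM m0 (b+1) ≤ 2 * (b+1) * b ^ refM m0 b := by
  have h := refM_succ m0 b hb
  have h2 : 1 < 2 * b ^ refM m0 b := by
    have : 0 < b ^ refM m0 b := by positivity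
    omega
  have h1 := Nat.pow_pred_clog_lt_self (b := b+1) (by omega) h2
  rw [← h] at h1
  have h3 : 0 < refM m0 (b+1) := by
    rw [h]; exact Nat.clog_pos (by omega) h2
  obtain ⟨s, hs⟩ := Nat.exists_eq_succ_of_ne_zero h3.ne'
  rw [hs] at h1 ⊢
  simp only [Nat.pred_succ, Nat.succ_eq_add_one] at h1 ⊢
  rw [pow_succ]
  nlinarith

theorem ref_nest (m0 a0 b : ℕ) (hb : 2 ≤ b) :
    (refA m0 a0 b : ℝ) / (b:ℝ) ^ refM m0 b ≤
      (refA m0 a0 (b+1) : ℝ) / ((b+1 : ℕ) : ℝ) ^ refM m0 (b+1) ∧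
    ((refA m0 a0 (b+1) : ℝ) + 1) / ((b+1 : ℕ) : ℝ) ^ refM m0 (b+1) ≤
      ((refA m0 a0 b : ℝ) + 1) / (b:ℝ) ^ refM m0 b := by
  have hl := refM_lower m0 b hb
  have hA := refA_succ m0 a0 b hb
  set A := refA m0 a0 b
  set A' := refA m0 a0 (b+1)
  have hB : 0 < b ^ refM m0 b := by positivity
  have hB' : 0 < (b+1) ^ refM m0 (b+1) := by positivity
  rw [← Nat.cast_pow, ← Nat.cast_pow]
  set B := b ^ refM m0 b
  set B' := (b+1) ^ refM m0 (b+1)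
  have h1 := Nat.div_mul_le_self (A * B') B
  have h2 := Nat.lt_div_mul_add (a := A * B') hB
  set Q := A * B' / B
  have c1 : (0:ℝ) < B := by exact_mod_cast hB
  have c2 : (0:ℝ) < B' := by exact_mod_cast hB'
  constructor
  · rw [div_le_div_iff₀ c1 c2]
    have : A * B' ≤ A' * B := by rw [hA]; nlinarith
    exact_mod_cast this
  · rw [div_le_div_iff₀ c2 c1]
    have : (A' + 1) * B ≤ (A + 1) * B' := by rw [hA]; nlinarith
    exact_mod_cast this

noncomputable def facP (b : ℕ) : ℝ := 2 ^ (b - 2) * (Nat.factorial b : ℝ) / 2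

theorem facP_pos (b : ℕ) : 0 < facP b := by unfold facP; positivity

theorem facP_two : facP 2 = 1 := by simp [facP]

theorem facP_succ (b : ℕ) (hb : 2 ≤ b) : facP (b + 1) = 2 * (b + 1) * facP b := by
  obtain ⟨c, rfl⟩ := Nat.exists_eq_add_of_le' hb
  unfold facP
  rw [Nat.factorial_succ, show c + 2 + 1 - 2 = c + 1 by omega, show c + 2 - 2 = c by omega]
  push_cast
  ring

theorem facP_mono (b n : ℕ) (hb : 2 ≤ b) (hn : b ≤ n) : facP b ≤ facP n := by
  induction n, hn using Nat.le_induction with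
  | base => exact le_rfl
  | succ n hn ih =>
    rw [facP_succ n (by omega)]
    have := facP_pos n
    have : (0:ℝ) ≤ n := by positivity
    nlinarith

theorem grow_bound (m : ℕ → ℕ) (n : ℕ)
    (h : ∀ b, 2 ≤ b → b < n →
      ((b + 1 : ℕ) : ℝ) ^ m (b+1) ≤ 2 * ((b:ℝ) + 1) * (b : ℝ) ^ m b) :
    ∀ b, 2 ≤ b → b ≤ n → (b : ℝ) ^ m b ≤ facP b * 2 ^ m 2 := by
  intro b hb
  induction b, hb using Nat.le_induction with
  | base => intro _; simp [facP_two]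
  | succ b hb ih =>
    intro hn
    refine (h b hb (by omega)).trans ?_
    rw [facP_succ b hb, mul_assoc _ (facP b)]
    exact mul_le_mul_of_nonneg_left (ih (by omega)) (by positivity)

theorem nest_trans (l u : ℕ → ℝ) (n : ℕ)
    (h : ∀ b, 2 ≤ b → b < n → l b ≤ l (b+1) ∧ u (b+1) ≤ u b)
    (b c : ℕ) (hb : 2 ≤ b) (hbc : b ≤ c) (hc : c ≤ n) : l b ≤ l c ∧ u c ≤ u b := by
  induction c, hbc using Nat.le_induction with
  | base => exact ⟨le_rfl, le_rfl⟩
  | succ c hbc ih =>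
    have h1 := ih (by omega)
    have h2 := h c (by omega) (by omega)
    exact ⟨h1.1.trans h2.1, h2.2.trans h1.2⟩

theorem vol_adic (x y : ℝ) : volume (Set.Ico (x / y) ((x + 1) / y)) = ENNReal.ofReal (1 / y) := by
  rw [Real.volume_Ico]; congr 1; ring

theorem vol_iff (X Y w : ℝ) (hX : 0 < X) (hY : 0 < Y) (hw : 0 < w) :
    ENNReal.ofReal (1 / X) / ENNReal.ofReal w ≤ ENNReal.ofReal (1 / Y) ↔ Y ≤ w * X := by
  rw [← ENNReal.ofReal_div_of_pos hw, ENNReal.ofReal_le_ofReal_iff (by positivity),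
    div_div, one_div_le_one_div (by positivity) hY, mul_comm]

theorem ofReal_w (b : ℕ) : (2 * ((b : ℝ≥0∞) + 1)) = ENNReal.ofReal (2 * ((b:ℝ) + 1)) := by
  rw [ENNReal.ofReal_mul (by norm_num), ENNReal.ofReal_add (by positivity) (by norm_num)]
  simp

theorem adic_lt (x y : ℝ) (hy : 0 < y) : x / y < (x + 1) / y := by gcongr; linarith

theorem ref_upper_real (m0 b : ℕ) (hb : 2 ≤ b) :
    ((b + 1 : ℕ) : ℝ) ^ refM m0 (b+1) ≤ 2 * ((b:ℝ) + 1) * (b : ℝ) ^ refM m0 b := by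
  exact_mod_cast refM_upper m0 b hb

/-- Lemma 4.8: suitability of one subinterval of the partition.  Let `i ≥ 1`, let
`δ_i = 1/(2^{2i−2}·((i+1)!)²)`, and let `k` be the least integer greater than
`max(⌈6(i+2)⌉, −ln(δ_i/(2(i+1)²))·6(i+2)²)`.  Let `(I_2, …, I_{i+1})` be an
`(i+1)`-sequence, where `I_b = [a_b/b^{m_b}, (a_b+1)/b^{m_b})`, let
`L = [c/2^p, (c+1)/2^p)` be a dyadic subinterval of `I_{i+1}` with
`μ(L) ≥ μ(I_{i+1})/4`, and partition `L` into `2^{k·⌈log₂(i+1)⌉}` dyadic subintervals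
of equal measure.  Then some subinterval `J_2` of this partition extends to an
`(i+1)`-sequence `(J_2, …, J_{i+1})` such that for every base `2 ≤ b ≤ i+1`,
`x_b(I⃗)` is a proper prefix of `x_b(J⃗)` and the block `u_b` with
`x_b(I⃗)·u_b = x_b(J⃗)` satisfies `D(u_b, b) ≤ 1/(i+2)`. -/
theorem exists_suitable_refinement
    (i : ℕ) (hi : 1 ≤ i)
    (δ : ℝ) (hδ : δ = 1 / (2 ^ (2 * i - 2) * ((Nat.factorial (i + 1) : ℝ)) ^ 2))
    (k : ℕ)
    (hk₁ : (k : ℝ) > max ((⌈6 * ((i : ℝ) + 2)⌉ : ℤ) : ℝ)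
      (-Real.log (δ / (2 * ((i : ℝ) + 1) ^ 2)) * (6 * ((i : ℝ) + 2) ^ 2)))
    (hk₂ : ∀ j : ℕ, (j : ℝ) > max ((⌈6 * ((i : ℝ) + 2)⌉ : ℤ) : ℝ)
      (-Real.log (δ / (2 * ((i : ℝ) + 1) ^ 2)) * (6 * ((i : ℝ) + 2) ^ 2)) → k ≤ j)
    (I : ℕ → Set ℝ) (m a : ℕ → ℕ)
    (hrep : ∀ b : ℕ, 2 ≤ b → b ≤ i + 1 → a b < b ^ m b ∧
      I b = Set.Ico ((a b : ℝ) / (b : ℝ) ^ m b) (((a b : ℝ) + 1) / (b : ℝ) ^ m b))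
    (hnest : ∀ b : ℕ, 2 ≤ b → b < i + 1 → I (b + 1) ⊆ I b ∧
      volume (I b) / (2 * ((b : ℝ≥0∞) + 1)) ≤ volume (I (b + 1)))
    (p c : ℕ) (hc : c < 2 ^ p) (L : Set ℝ)
    (hL : L = Set.Ico ((c : ℝ) / 2 ^ p) (((c : ℝ) + 1) / 2 ^ p))
    (hLsub : L ⊆ I (i + 1)) (hLμ : volume (I (i + 1)) / 4 ≤ volume L) :
    ∃ r : ℕ, r < 2 ^ (k * Nat.clog 2 (i + 1)) ∧
      ∃ (J : ℕ → Set ℝ) (m' a' : ℕ → ℕ),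
        (∀ b : ℕ, 2 ≤ b → b ≤ i + 1 → a' b < b ^ m' b ∧
          J b = Set.Ico ((a' b : ℝ) / (b : ℝ) ^ m' b) (((a' b : ℝ) + 1) / (b : ℝ) ^ m' b)) ∧
        (∀ b : ℕ, 2 ≤ b → b < i + 1 → J (b + 1) ⊆ J b ∧
          volume (J b) / (2 * ((b : ℝ≥0∞) + 1)) ≤ volume (J (b + 1))) ∧
        J 2 = Set.Ico
          (((c * 2 ^ (k * Nat.clog 2 (i + 1)) + r : ℕ) : ℝ) / 2 ^ (p + k * Nat.clog 2 (i + 1)))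
          ((((c * 2 ^ (k * Nat.clog 2 (i + 1)) + r : ℕ) : ℝ) + 1) /
            2 ^ (p + k * Nat.clog 2 (i + 1))) ∧
        ∀ b : ℕ, 2 ≤ b → b ≤ i + 1 →
          ∃ u : List ℕ, u ≠ [] ∧ xblock b (m b) (a b) ++ u = xblock b (m' b) (a' b) ∧
            simpleDisc b u ≤ 1 / ((i : ℝ) + 2) := by
  classical
  set n := i + 1 with hn
  set K := k * Nat.clog 2 n with hK
  have pw : ∀ (b e : ℕ), 2 ≤ b → (0:ℝ) < (b:ℝ) ^ e := by
    intro b e hb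
    have : (0:ℝ) < b := by exact_mod_cast (by omega : 0 < b)
    positivity
  -- facts about I
  have hI : ∀ b, 2 ≤ b → b < n →
      ((a b : ℝ) / (b : ℝ) ^ m b ≤ (a (b+1) : ℝ) / ((b+1 : ℕ) : ℝ) ^ m (b+1) ∧
       ((a (b+1) : ℝ) + 1) / ((b+1 : ℕ) : ℝ) ^ m (b+1) ≤ ((a b : ℝ) + 1) / (b : ℝ) ^ m b) ∧
      ((b + 1 : ℕ) : ℝ) ^ m (b+1) ≤ 2 * ((b:ℝ) + 1) * (b : ℝ) ^ m b := by
    intro b hb hbn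
    obtain ⟨h1, h2⟩ := hnest b hb hbn
    rw [(hrep b hb hbn.le).2, (hrep (b+1) (by omega) hbn).2] at h1 h2
    refine ⟨(Set.Ico_subset_Ico_iff (adic_lt _ _ (pw _ _ (by omega)))).mp h1, ?_⟩
    rw [vol_adic, vol_adic, ofReal_w, vol_iff _ _ _ (pw _ _ hb) (pw _ _ (by omega)) (by positivity)]
      at h2
    exact h2
  have hn2 : 2 ≤ n := by omega
  have hL1 : (a n : ℝ) / (n : ℝ) ^ m n ≤ (c : ℝ) / 2 ^ p ∧
      ((c:ℝ) + 1) / 2 ^ p ≤ ((a n : ℝ) + 1) / (n : ℝ) ^ m n := by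
    rw [hL, (hrep n hn2 le_rfl).2] at hLsub
    exact (Set.Ico_subset_Ico_iff (adic_lt _ _ (by positivity))).mp hLsub
  have hL2 : (2:ℝ) ^ p ≤ 4 * (n : ℝ) ^ m n := by
    rw [hL, (hrep n hn2 le_rfl).2, vol_adic, vol_adic,
      show (4:ℝ≥0∞) = ENNReal.ofReal 4 by simp,
      vol_iff _ _ _ (pw _ _ hn2) (by positivity) (by positivity)] at hLμ
    exact hLμ
  have hL3 : ∀ b, 2 ≤ b → b ≤ n → (a b : ℝ) / (b : ℝ) ^ m b ≤ (c : ℝ) / 2 ^ p ∧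
      ((c:ℝ) + 1) / 2 ^ p ≤ ((a b : ℝ) + 1) / (b : ℝ) ^ m b := by
    intro b hb hbn
    have := nest_trans (fun b => (a b : ℝ) / (b : ℝ) ^ m b)
      (fun b => ((a b : ℝ) + 1) / (b : ℝ) ^ m b) n (fun b hb hbn => (hI b hb hbn).1) b n hb hbn le_rfl
    exact ⟨this.1.trans hL1.1, hL1.2.trans this.2⟩
  have hm2 : ∀ b, 2 ≤ b → b ≤ n → (2:ℝ) ^ m 2 ≤ (b:ℝ) ^ m b := by
    intro b hb hbn
    have := nest_trans (fun b => (a b : ℝ) / (b : ℝ) ^ m b)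
      (fun b => ((a b : ℝ) + 1) / (b : ℝ) ^ m b) n (fun b hb hbn => (hI b hb hbn).1) 2 b le_rfl hb hbn
    have h1 := this.1
    have h2 := this.2
    simp only [add_div] at h1 h2
    have h3 : 1 / (b:ℝ) ^ m b ≤ 1 / (2:ℝ) ^ m 2 := by push_cast at h1 h2 ⊢; linarith
    exact (one_div_le_one_div (pw _ _ hb) (by positivity)).mp h3
  have hmb : (2:ℝ) ^ p ≤ 4 * (facP n * 2 ^ m 2) := by
    have := grow_bound m n (fun b hb hbn => (hI b hb hbn).2) n hn2 le_rfl
    linarith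
  -- the refinement
  set M := refM (p + K) with hM
  set A : ℕ → ℕ → ℕ := fun r b => refA (p + K) (c * 2 ^ K + r) b with hA
  have hM2 : M 2 = p + K := by simp [hM, refM]
  have hA2 : ∀ r, A r 2 = c * 2 ^ K + r := by intro r; simp [hA, refA]
  have hJ2 : ∀ r b, 2 ≤ b →
      ((c * 2 ^ K + r : ℕ) : ℝ) / 2 ^ (p + K) ≤ (A r b : ℝ) / (b:ℝ) ^ M b ∧
      ((A r b : ℝ) + 1) / (b:ℝ) ^ M b ≤ (((c * 2 ^ K + r : ℕ) : ℝ) + 1) / 2 ^ (p + K) := by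
    intro r b hb
    have := nest_trans (fun b => (A r b : ℝ) / (b : ℝ) ^ M b)
      (fun b => ((A r b : ℝ) + 1) / (b : ℝ) ^ M b) b
      (fun b hb _ => ref_nest _ _ b hb) 2 b le_rfl hb le_rfl
    simp only [hM2, hA2] at this
    exact_mod_cast this
  have hJL : ∀ r b, r < 2 ^ K → 2 ≤ b →
      (c : ℝ) / 2 ^ p ≤ (A r b : ℝ) / (b:ℝ) ^ M b ∧
      ((A r b : ℝ) + 1) / (b:ℝ) ^ M b ≤ ((c:ℝ) + 1) / 2 ^ p := by
    intro r b hr hb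
    obtain ⟨h1, h2⟩ := hJ2 r b hb
    have hr' : (r:ℝ) + 1 ≤ 2 ^ K := by exact_mod_cast hr
    constructor
    · refine le_trans ?_ h1
      rw [div_le_div_iff₀ (by positivity) (by positivity), pow_add]
      push_cast
      have : (0:ℝ) ≤ r * 2 ^ p := by positivity
      linarith
    · refine h2.trans ?_
      rw [div_le_div_iff₀ (by positivity) (by positivity), pow_add]
      push_cast
      have : (0:ℝ) < 2 ^ p := by positivity
      nlinarith
  have hJI : ∀ r b, r < 2 ^ K → 2 ≤ b → b ≤ n →
      (a b : ℝ) / (b : ℝ) ^ m b ≤ (A r b : ℝ) / (b:ℝ) ^ M b ∧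
      ((A r b : ℝ) + 1) / (b:ℝ) ^ M b ≤ ((a b : ℝ) + 1) / (b : ℝ) ^ m b := by
    intro r b hr hb hbn
    have h1 := hJL r b hr hb
    have h2 := hL3 b hb hbn
    exact ⟨h2.1.trans h1.1, h1.2.trans h2.2⟩
  -- lengths
  have hlen : ∀ b, 2 ≤ b → b ≤ n → m b + k ≤ M b := by
    intro b hb hbn
    obtain ⟨h1, h2⟩ := hJ2 0 b hb
    obtain ⟨h3, h4⟩ := hL3 b hb hbn
    rw [add_div, add_div] at h2 h4
    have h5 : 1 / (b:ℝ) ^ M b ≤ 1 / 2 ^ (p + K) := by linarith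
    have h6 : 1 / (2:ℝ) ^ p ≤ 1 / (b:ℝ) ^ m b := by linarith
    rw [one_div_le_one_div (pw _ _ hb) (by positivity)] at h5
    rw [one_div_le_one_div (by positivity) (pw _ _ hb)] at h6
    have h7 : (b:ℝ) ^ k ≤ 2 ^ K := by
      have e1 : n ≤ 2 ^ Nat.clog 2 n := Nat.le_pow_clog (by norm_num) n
      have e2 : b ^ k ≤ 2 ^ K := by
        rw [hK, mul_comm, pow_mul]
        exact Nat.pow_le_pow_left (hbn.trans e1) k
      exact_mod_cast e2
    have h8 : (b:ℝ) ^ (m b + k) ≤ (b:ℝ) ^ M b := by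
      refine le_trans ?_ h5
      rw [pow_add, pow_add]
      exact mul_le_mul h6 h7 (pw _ _ hb).le (by positivity)
    have h9 : b ^ (m b + k) ≤ b ^ M b := by exact_mod_cast h8
    exact (Nat.pow_le_pow_iff_right (by omega)).mp h9
  set l : ℕ → ℕ := fun b => M b - m b with hl
  have hml : ∀ b, 2 ≤ b → b ≤ n → M b = m b + l b := by
    intro b hb hbn
    have := hlen b hb hbn
    simp only [hl]; omega
  have hkl : ∀ b, 2 ≤ b → b ≤ n → k ≤ l b := by
    intro b hb hbn
    have := hlen b hb hbn
    simp only [hl]; omega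
  have hAin : ∀ r b, r < 2 ^ K → 2 ≤ b → b ≤ n →
      a b * b ^ l b ≤ A r b ∧ A r b < a b * b ^ l b + b ^ l b := by
    intro r b hr hb hbn
    obtain ⟨h1, h2⟩ := hJI r b hr hb hbn
    have p1 := pw b (m b) hb
    have p2 := pw b (l b) hb
    rw [hml b hb hbn, pow_add] at h1 h2
    rw [div_le_div_iff₀ (by positivity) (by positivity)] at h1 h2
    have h1' : (a b : ℝ) * (b:ℝ) ^ l b ≤ A r b := by
      refine le_of_mul_le_mul_right ?_ p1
      linarith
    have h2' : (A r b : ℝ) + 1 ≤ (a b : ℝ) * (b:ℝ) ^ l b + (b:ℝ) ^ l b := by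
      refine le_of_mul_le_mul_right ?_ p1
      linarith
    constructor
    · exact_mod_cast h1'
    · have : A r b + 1 ≤ a b * b ^ l b + b ^ l b := by exact_mod_cast h2'
      omega
  have hAinj : ∀ r r' b, 2 ≤ b → A r b = A r' b → r ≤ r' := by
    intro r r' b hb h
    have h1 := (hJ2 r b hb).1
    have h2 := (hJ2 r' b hb).2
    rw [← h] at h2
    have h3 := h1.trans_lt ((adic_lt _ _ (pw b (M b) hb)).trans_le h2)
    rw [div_lt_div_iff_of_pos_right (by positivity)] at h3
    have : c * 2 ^ K + r < c * 2 ^ K + r' + 1 := by exact_mod_cast h3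
    omega
  -- constants
  have hnR : (n:ℝ) = (i:ℝ) + 1 := by simp [hn]
  have hδP : δ = 1 / (4 * facP n ^ 2) := by
    rw [hδ]
    congr 1
    unfold facP
    rw [show 2 * i - 2 = (n - 2) * 2 by omega, pow_mul]
    ring
  have hP := facP_pos n
  have hδ0 : 0 < δ := by rw [hδP]; positivity
  have hP1 : 1 ≤ facP n := by rw [← facP_two]; exact facP_mono 2 n le_rfl hn2
  have hδ1 : δ ≤ 1 := by
    rw [hδP, div_le_one (by positivity)]
    nlinarith
  set q := δ / (2 * ((i:ℝ) + 1) ^ 2) with hq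
  have hq0 : 0 < q := by positivity
  have hq1 : q < 1 := by
    rw [hq, div_lt_one (by positivity)]
    have : (0:ℝ) ≤ i := by positivity
    nlinarith
  have hk0 : 0 < k := by
    have h1 := lt_of_le_of_lt (le_max_left _ _) hk₁
    have h2 := Int.le_ceil (6 * ((i:ℝ) + 2))
    have h3 : (0:ℝ) < k := by
      have : (0:ℝ) ≤ i := by positivity
      linarith
    exact_mod_cast h3
  set ε : ℝ := 1 / ((i:ℝ) + 2) with hε
  have hε0 : 0 < ε := by positivity
  have hε1 : ε ≤ 1 := by
    rw [hε, div_le_one (by positivity)]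
    have : (0:ℝ) ≤ i := by positivity
    linarith
  have hexp : ∀ t : ℕ, k ≤ t → Real.exp (-(t * (ε ^ 2 / 2))) ≤ q ^ 3 := by
    intro t ht
    have h1 := lt_of_le_of_lt (le_max_right _ _) hk₁
    have ht' : (k:ℝ) ≤ t := by exact_mod_cast ht
    have h2 : -Real.log q * (6 * ((i:ℝ) + 2) ^ 2) ≤ t := by linarith
    have h3 := mul_le_mul_of_nonneg_right h2 (by positivity : 0 ≤ ε ^ 2 / 2)
    have h4 : -Real.log q * (6 * ((i:ℝ) + 2) ^ 2) * (ε ^ 2 / 2) = - (3 * Real.log q) := by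
      rw [hε]; field_simp; ring
    have h5 : q ^ 3 = Real.exp (3 * Real.log q) := by
      rw [show (3:ℝ) * Real.log q = ((3:ℕ):ℝ) * Real.log q by norm_num, Real.exp_nat_mul,
        Real.exp_log hq0]
    rw [h5]
    apply Real.exp_le_exp.mpr
    linarith
  have hbl : ∀ b, 2 ≤ b → b ≤ n → (b:ℝ) ^ l b * δ ≤ 2 ^ K := by
    intro b hb hbn
    have h1 := grow_bound M n (fun b hb _ => ref_upper_real _ b hb) b hb hbn
    have h2 := hm2 b hb hbn
    have h3 := facP_mono b n hb hbn
    rw [hml b hb hbn, hM2, pow_add, pow_add] at h1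
    have h4 : (2:ℝ) ^ m 2 * (b:ℝ) ^ l b ≤ 2 ^ m 2 * (4 * facP n ^ 2 * 2 ^ K) := by
      calc (2:ℝ) ^ m 2 * (b:ℝ) ^ l b ≤ (b:ℝ) ^ m b * (b:ℝ) ^ l b := by gcongr
        _ ≤ facP b * (2 ^ p * 2 ^ K) := h1
        _ ≤ facP n * ((4 * (facP n * 2 ^ m 2)) * 2 ^ K) := by gcongr
        _ = _ := by ring
    have h5 := le_of_mul_le_mul_left h4 (by positivity)
    rw [hδP, mul_one_div, div_le_iff₀ (by positivity)]
    linarith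
  -- the bad set
  set bad : ℕ → ℕ → Finset ℕ := fun b d => (Finset.range (2 ^ K)).filter
    (fun r => ε < |((xblock b (l b) (A r b)).count d : ℝ) / l b - 1 / b|) with hbad
  have hbadcard : ∀ b d, 2 ≤ b → b ≤ n → d < b → ((bad b d).card : ℝ) ≤ 2 * q ^ 3 * (2 ^ K / δ) := by
    intro b d hb hbn hd
    set S := (bad b d).image (fun r => A r b - a b * b ^ l b) with hS
    have hc : S.card = (bad b d).card := by
      apply Finset.card_image_of_injOn
      intro r hr r' hr' h
      have hr1 := hAin r b (Finset.mem_range.mp (Finset.mem_filter.mp hr).1) hb hbn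
      have hr2 := hAin r' b (Finset.mem_range.mp (Finset.mem_filter.mp hr').1) hb hbn
      have h' : A r b = A r' b := by
        simp only at h
        omega
      exact le_antisymm (hAinj r r' b hb h') (hAinj r' r b hb h'.symm)
    have h1 := bad_bound b d hb hd ε hε0 hε1 (a b) (l b) (hk0.trans_le (hkl b hb hbn)) S (by
        intro w hw
        obtain ⟨r, hr, rfl⟩ := Finset.mem_image.mp hw
        have hr1 := hAin r b (Finset.mem_range.mp (Finset.mem_filter.mp hr).1) hb hbn
        rw [Finset.mem_range]
        omega) (by
        intro w hw
        obtain ⟨r, hr, rfl⟩ := Finset.mem_image.mp hw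
        have hr1 := hAin r b (Finset.mem_range.mp (Finset.mem_filter.mp hr).1) hb hbn
        rw [Nat.add_sub_cancel' hr1.1]
        exact (Finset.mem_filter.mp hr).2)
    rw [hc] at h1
    have h2 := hexp (l b) (hkl b hb hbn)
    have h3 : (b:ℝ) ^ l b ≤ 2 ^ K / δ := by
      rw [le_div_iff₀ hδ0]; exact hbl b hb hbn
    calc _ ≤ _ := h1
      _ ≤ 2 * ((2 ^ K / δ) * q ^ 3) := by gcongr
      _ = _ := by ring
  obtain ⟨r, hr, hgood⟩ : ∃ r, r < 2 ^ K ∧ ∀ b d, 2 ≤ b → b ≤ n → d < b →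
      |((xblock b (l b) (A r b)).count d : ℝ) / l b - 1 / b| ≤ ε := by
    by_contra! hcon
    have hsub : Finset.range (2 ^ K) ⊆
        (Finset.range n).biUnion (fun b' => (Finset.range n).biUnion
          (fun d => if b' + 1 < 2 ∨ b' + 1 ≤ d then ∅ else bad (b' + 1) d)) := by
      intro r hr
      obtain ⟨b, d, hb, hbn, hd, h⟩ := hcon r (Finset.mem_range.mp hr)
      rw [Finset.mem_biUnion]
      refine ⟨b - 1, Finset.mem_range.mpr (by omega), ?_⟩
      rw [Finset.mem_biUnion]
      refine ⟨d, Finset.mem_range.mpr (by omega), ?_⟩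
      rw [show b - 1 + 1 = b by omega, if_neg (by omega)]
      exact Finset.mem_filter.mpr ⟨hr, h⟩
    have h1 := Finset.card_le_card hsub
    have h2 : ((Finset.range (2 ^ K)).card : ℝ) ≤
        ∑ b' ∈ Finset.range n, ∑ d ∈ Finset.range n, 2 * q ^ 3 * (2 ^ K / δ) := by
      refine le_trans (Nat.cast_le.mpr h1) ?_
      refine le_trans (Nat.cast_le.mpr Finset.card_biUnion_le) ?_
      rw [Nat.cast_sum]
      refine Finset.sum_le_sum (fun b' hb' => ?_)
      refine le_trans (Nat.cast_le.mpr Finset.card_biUnion_le) ?_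
      rw [Nat.cast_sum]
      refine Finset.sum_le_sum (fun d hd' => ?_)
      rw [Finset.mem_range] at hb' hd'
      split_ifs with hif
      · rw [Finset.card_empty, Nat.cast_zero]; positivity
      · exact hbadcard _ _ (by omega) (by omega) (by omega)
    simp only [Finset.sum_const, Finset.card_range, nsmul_eq_mul] at h2
    have h3 : (n:ℝ) * (n * (2 * q ^ 3 * (2 ^ K / δ))) = q ^ 2 * 2 ^ K := by
      have : q * (2 * (n:ℝ) ^ 2) = δ := by rw [hq, hnR]; field_simp
      rw [← this]
      have : (n:ℝ) ≠ 0 := by positivity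
      field_simp
    rw [h3] at h2
    push_cast at h2
    have h4 : q ^ 2 < 1 := pow_lt_one₀ hq0.le hq1 (by norm_num)
    have h5 : (0:ℝ) < 2 ^ K := by positivity
    nlinarith
  refine ⟨r, hr, fun b => Set.Ico ((A r b : ℝ) / (b : ℝ) ^ M b) (((A r b : ℝ) + 1) / (b : ℝ) ^ M b),
    M, A r, ?_, ?_, ?_, ?_⟩
  · intro b hb hbn
    refine ⟨?_, rfl⟩
    have h1 := (hAin r b hr hb hbn).2
    have h2 := (hrep b hb hbn).1
    rw [hml b hb hbn, pow_add]
    calc A r b < (a b + 1) * b ^ l b := by rw [add_mul, one_mul]; exact h1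
      _ ≤ _ := Nat.mul_le_mul_right _ h2
  · intro b hb hbn
    have h1 := ref_nest (p + K) (c * 2 ^ K + r) b hb
    refine ⟨Set.Ico_subset_Ico h1.1 h1.2, ?_⟩
    rw [vol_adic, vol_adic, ofReal_w, vol_iff _ _ _ (pw _ _ hb) (pw _ _ (by omega)) (by positivity)]
    exact ref_upper_real _ b hb
  · simp only [hM2, hA2]
    norm_num
  · intro b hb hbn
    have hlpos := hk0.trans_le (hkl b hb hbn)
    refine ⟨xblock b (l b) (A r b), ?_, ?_, ?_⟩
    · intro h
      have := xblock_length b (l b) (A r b)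
      rw [h] at this
      simp at this
      omega
    · have h1 := hAin r b hr hb hbn
      have h2 : A r b / b ^ l b = a b := by
        apply Nat.div_eq_of_lt_le
        · exact h1.1
        · rw [add_mul, one_mul]; exact h1.2
      rw [hml b hb hbn, ← xblock_split b (m b) (by omega) (l b), h2]
    · unfold simpleDisc
      apply csSup_le
      · exact ⟨_, 0, (by simp only [Set.mem_setOf_eq]; omega), rfl⟩
      · rintro _ ⟨d, hd, rfl⟩
        simp only [xblock_length]
        exact hgood b d hb hbn hd
end
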